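/- Let Z be a real random variable with Z ~ N(0, σ²), σ > 0, and let α > 0. Then for every s > 0, P([1 + exp(2α) exp(−αZ²/σ²)]⁻¹ Z ≤ s) = 1/2 + P(0 ≤ Z ≤ g(s)) > P(Z ≤ s), where g is the inverse of the strictly increasing bijection h : [0,∞) → [0,∞), h(ξ) = ξ/(1 + exp(2α) exp(−αξ²/σ²)). -/

import Mathlib

open MeasureTheory Matrix Real Filter Topology ENNReal NNReal

noncomputable section

/-- Euclidean norm of a finite tuple. -/
def enorm2 {ι : Type*} [Fintype ι] (v : ι → ℝ) : ℝ := Real.sqrt (∑ i, v i ^ 2)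

/-- The `N(0, σ² I)` distribution on `ι → ℝ`, given by its Lebesgue density. -/
def gaussPi (ι : Type*) [Fintype ι] (σ2 : ℝ) : Measure (ι → ℝ) :=
  volume.withDensity fun x => ENNReal.ofReal
    ((2 * π * σ2) ^ (-(Fintype.card ι : ℝ) / 2) * Real.exp (-(enorm2 x) ^ 2 / (2 * σ2)))

/-- The Lebesgue density of the `N(0, σ² Q⁻¹)` distribution on `ι → ℝ`
(for `Q` symmetric positive definite). -/
def gaussCovDens {ι : Type*} [Fintype ι] [DecidableEq ι] (σ2 : ℝ) (Q : Matrix ι ι ℝ)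
    (x : ι → ℝ) : ℝ :=
  (2 * π * σ2) ^ (-(Fintype.card ι : ℝ) / 2) * Real.sqrt Q.det *
    Real.exp (-(x ⬝ᵥ Q.mulVec x) / (2 * σ2))

/-- The `N(0, σ² Q⁻¹)` distribution on `ι → ℝ` (for `Q` symmetric positive definite),
given by its Lebesgue density. -/
def gaussCov {ι : Type*} [Fintype ι] [DecidableEq ι] (σ2 : ℝ) (Q : Matrix ι ι ℝ) :
    Measure (ι → ℝ) :=
  volume.withDensity fun x => ENNReal.ofReal (gaussCovDens σ2 Q x)

open Classical in
/-- Symmetric positive semidefinite square root (junk value `0` off the psd cone). -/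
def msqrt {ι : Type*} [Fintype ι] [DecidableEq ι] (A : Matrix ι ι ℝ) : Matrix ι ι ℝ :=
  if h : A.PosSemidef then
    (h.isHermitian.eigenvectorUnitary : Matrix ι ι ℝ) *
      diagonal (Real.sqrt ∘ h.isHermitian.eigenvalues) *
      (star h.isHermitian.eigenvectorUnitary : Matrix ι ι ℝ)
  else 0

open Classical in
/-- Smallest eigenvalue of a symmetric matrix (junk value `0` otherwise). -/
def lamMin {ι : Type*} [Fintype ι] [DecidableEq ι] (A : Matrix ι ι ℝ) : ℝ :=
  if h : A.IsHermitian then ⨅ i, h.eigenvalues i else 0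

open Classical in
/-- Largest eigenvalue of a symmetric matrix (junk value `0` otherwise). -/
def lamMax {ι : Type*} [Fintype ι] [DecidableEq ι] (A : Matrix ι ι ℝ) : ℝ :=
  if h : A.IsHermitian then ⨆ i, h.eigenvalues i else 0

variable {n k₁ k₂ : ℕ}

/-- First block of columns of the design matrix. -/
def X1 (X : Matrix (Fin n) (Fin k₁ ⊕ Fin k₂) ℝ) : Matrix (Fin n) (Fin k₁) ℝ :=
  X.submatrix id Sum.inl

/-- Second block of columns of the design matrix. -/
def X2 (X : Matrix (Fin n) (Fin k₁ ⊕ Fin k₂) ℝ) : Matrix (Fin n) (Fin k₂) ℝ :=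
  X.submatrix id Sum.inr

/-- Unrestricted least squares estimator. -/
def betaU (X : Matrix (Fin n) (Fin k₁ ⊕ Fin k₂) ℝ) (Y : Fin n → ℝ) : (Fin k₁ ⊕ Fin k₂) → ℝ :=
  (Xᵀ * X)⁻¹.mulVec (Xᵀ.mulVec Y)

/-- Restricted least squares estimator. -/
def betaR (X : Matrix (Fin n) (Fin k₁ ⊕ Fin k₂) ℝ) (Y : Fin n → ℝ) : (Fin k₁ ⊕ Fin k₂) → ℝ :=
  Sum.elim (((X1 X)ᵀ * X1 X)⁻¹.mulVec ((X1 X)ᵀ.mulVec Y)) (fun _ => 0)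

/-- Risk estimate of the restricted model. -/
def rR (X : Matrix (Fin n) (Fin k₁ ⊕ Fin k₂) ℝ) (σ2 : ℝ) (Y : Fin n → ℝ) : ℝ :=
  Y ⬝ᵥ Y - betaR X Y ⬝ᵥ (Xᵀ * X).mulVec (betaR X Y) + σ2 * (2 * k₁ - n)

/-- Risk estimate of the unrestricted model. -/
def rU (X : Matrix (Fin n) (Fin k₁ ⊕ Fin k₂) ℝ) (σ2 : ℝ) (Y : Fin n → ℝ) : ℝ :=
  Y ⬝ᵥ Y - betaU X Y ⬝ᵥ (Xᵀ * X).mulVec (betaU X Y) + σ2 * (2 * (k₁ + k₂) - n)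

/-- The model averaging weight `λ̂`. -/
def lamHat (α σ2 : ℝ) (X : Matrix (Fin n) (Fin k₁ ⊕ Fin k₂) ℝ) (Y : Fin n → ℝ) : ℝ :=
  Real.exp (-(α * rR X σ2 Y) / σ2) /
    (Real.exp (-(α * rR X σ2 Y) / σ2) + Real.exp (-(α * rU X σ2 Y) / σ2))

/-- Leung and Barron's model averaging estimator `β̃`. -/
def mavg (α σ2 : ℝ) (X : Matrix (Fin n) (Fin k₁ ⊕ Fin k₂) ℝ) (Y : Fin n → ℝ) :
    (Fin k₁ ⊕ Fin k₂) → ℝ :=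
  lamHat α σ2 X Y • betaR X Y + (1 - lamHat α σ2 X Y) • betaU X Y

/-- Projection on the column space of `X₁`. -/
def projR (X : Matrix (Fin n) (Fin k₁ ⊕ Fin k₂) ℝ) : Matrix (Fin n) (Fin n) ℝ :=
  X1 X * ((X1 X)ᵀ * X1 X)⁻¹ * (X1 X)ᵀ

/-- Projection on the column space of `X`. -/
def projU (X : Matrix (Fin n) (Fin k₁ ⊕ Fin k₂) ℝ) : Matrix (Fin n) (Fin n) ℝ :=
  X * (Xᵀ * X)⁻¹ * Xᵀ

/-- The distribution `P_{n,β,σ}` of `Y = Xβ + u`, `u ~ N(0, σ² Iₙ)`. -/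
def Pmeas (X : Matrix (Fin n) (Fin k₁ ⊕ Fin k₂) ℝ) (β : (Fin k₁ ⊕ Fin k₂) → ℝ) (σ2 : ℝ) :
    Measure (Fin n → ℝ) :=
  (gaussPi (Fin n) σ2).map (fun u => X.mulVec β + u)

/-- The function `h_{a,b}(ξ) = ξ / (1 + a exp(−ξ²/b))`. -/
def hfun (a b ξ : ℝ) : ℝ := ξ / (1 + a * Real.exp (-ξ ^ 2 / b))

/-- The inverse `g_{a,b}` of `h_{a,b}`. -/
def gfun (a b : ℝ) : ℝ → ℝ := Function.invFun (hfun a b)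

open Classical in
/-- `g(‖w‖) w / ‖w‖`, with the convention that this is `0` for `w = 0`. -/
def gdir (a b : ℝ) {ι : Type*} [Fintype ι] (w : ι → ℝ) : ι → ℝ :=
  if w = 0 then 0 else (gfun a b (enorm2 w) / enorm2 w) • w


/-- The finite-sample density `f_{n,β,σ}` of `√n(β̃ − β)` (Theorem 3 of the paper). -/
def fdens {n k₁ k₂ : ℕ} (X : Matrix (Fin n) (Fin k₁ ⊕ Fin k₂) ℝ)
    (β : (Fin k₁ ⊕ Fin k₂) → ℝ) (σ2 α : ℝ) (t : (Fin k₁ ⊕ Fin k₂) → ℝ) : ℝ :=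
  let a := Real.exp (2 * α * k₂)
  let b := σ2 / α
  let S := (X2 X)ᵀ * (1 - projR X) * X2 X
  let w := (Real.sqrt n)⁻¹ • (msqrt S).mulVec ((t ∘ Sum.inr) + Real.sqrt n • (β ∘ Sum.inr))
  (2 * π * σ2) ^ (-((k₁ : ℝ) + k₂) / 2) * Real.sqrt (((n : ℝ)⁻¹ • (Xᵀ * X)).det) *
    Real.exp (-(enorm2 ((Real.sqrt n)⁻¹ •
        ((msqrt ((X1 X)ᵀ * X1 X)).mulVec (t ∘ Sum.inl) +
          ((msqrt ((X1 X)ᵀ * X1 X))⁻¹ * (X1 X)ᵀ * X2 X).mulVec (t ∘ Sum.inr)))) ^ 2 /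
      (2 * σ2)) *
    (1 + Real.exp (-(α / σ2) * gfun a b (enorm2 w) ^ 2 + 2 * α * k₂)) ^ (k₂ : ℕ) *
    (1 + (2 * α / σ2) * gfun a b (enorm2 w) ^ 2 *
        (1 + Real.exp ((α / σ2) * gfun a b (enorm2 w) ^ 2 - 2 * α * k₂))⁻¹)⁻¹ *
    Real.exp (-(enorm2 (gdir a b w - (msqrt S).mulVec (β ∘ Sum.inr))) ^ 2 / (2 * σ2))

/-- The density `f_{∞,γ}` of the limiting distribution (formula (13) of the paper),
stated for a general symmetric positive definite matrix in place of `Q`. -/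
def fInfty {k₁ k₂ : ℕ} (Q : Matrix (Fin k₁ ⊕ Fin k₂) (Fin k₁ ⊕ Fin k₂) ℝ) (σ2 α : ℝ)
    (γ : Fin k₂ → ℝ) (t : (Fin k₁ ⊕ Fin k₂) → ℝ) : ℝ :=
  let a := Real.exp (2 * α * k₂)
  let b := σ2 / α
  let S := Q.toBlocks₂₂ - Q.toBlocks₂₁ * Q.toBlocks₁₁⁻¹ * Q.toBlocks₁₂
  let w := (msqrt S).mulVec ((t ∘ Sum.inr) + γ)
  (2 * π * σ2) ^ (-((k₁ : ℝ) + k₂) / 2) * Real.sqrt Q.det *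
    Real.exp (-(enorm2 ((msqrt Q.toBlocks₁₁).mulVec (t ∘ Sum.inl) +
        ((msqrt Q.toBlocks₁₁)⁻¹ * Q.toBlocks₁₂).mulVec (t ∘ Sum.inr))) ^ 2 / (2 * σ2)) *
    (1 + Real.exp (-(α / σ2) * gfun a b (enorm2 w) ^ 2 + 2 * α * k₂)) ^ (k₂ : ℕ) *
    (1 + (2 * α / σ2) * gfun a b (enorm2 w) ^ 2 *
        (1 + Real.exp ((α / σ2) * gfun a b (enorm2 w) ^ 2 - 2 * α * k₂))⁻¹)⁻¹ *
    Real.exp (-(enorm2 (gdir a b w - (msqrt S).mulVec γ)) ^ 2 / (2 * σ2))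


/-- The limiting law (12): the distribution of
`B_∞γ + C_∞Z₁ + [1 + exp(2αk₂) exp(−α‖Z₂ + (Q₂₂ − Q₂₁Q₁₁⁻¹Q₁₂)^{1/2}γ‖²/σ²)]⁻¹
  · (D_∞Z₂ − B_∞γ)` with `Z₁ ~ N(0, σ²I_{k₁})`, `Z₂ ~ N(0, σ²I_{k₂})` independent. -/
def limitLaw {k₁ k₂ : ℕ} (Q : Matrix (Fin k₁ ⊕ Fin k₂) (Fin k₁ ⊕ Fin k₂) ℝ) (σ2 α : ℝ)
    (γ : Fin k₂ → ℝ) : Measure ((Fin k₁ ⊕ Fin k₂) → ℝ) :=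
  ((gaussPi (Fin k₁) σ2).prod (gaussPi (Fin k₂) σ2)).map
    (fun Z : (Fin k₁ → ℝ) × (Fin k₂ → ℝ) =>
      (fromRows (Q.toBlocks₁₁⁻¹ * Q.toBlocks₁₂) (-1)).mulVec γ +
      (fromRows (msqrt Q.toBlocks₁₁)⁻¹ 0).mulVec Z.1 +
      (1 + Real.exp (2 * α * k₂) *
          Real.exp (-α * (enorm2 (Z.2 +
            (msqrt (Q.toBlocks₂₂ - Q.toBlocks₂₁ * Q.toBlocks₁₁⁻¹ * Q.toBlocks₁₂)).mulVec
              γ)) ^ 2 / σ2))⁻¹ •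
        ((fromRows
            (-(Q.toBlocks₁₁⁻¹ * Q.toBlocks₁₂ *
              (msqrt (Q.toBlocks₂₂ - Q.toBlocks₂₁ * Q.toBlocks₁₁⁻¹ * Q.toBlocks₁₂))⁻¹))
            ((msqrt (Q.toBlocks₂₂ - Q.toBlocks₂₁ * Q.toBlocks₁₁⁻¹ * Q.toBlocks₁₂))⁻¹)).mulVec
            Z.2 -
          (fromRows (Q.toBlocks₁₁⁻¹ * Q.toBlocks₁₂) (-1)).mulVec γ))


lemma hfun_lt_aux (a b x y : ℝ) (ha : 0 < a) (hb : 0 < b) (hx : 0 ≤ x) (hxy : x < y) :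
    hfun a b x < hfun a b y := by
  unfold hfun
  have h1 : Real.exp (-y ^ 2 / b) ≤ Real.exp (-x ^ 2 / b) := by
    apply Real.exp_le_exp.mpr
    gcongr
  have hy : 0 < y := lt_of_le_of_lt hx hxy
  have h2 : 0 < Real.exp (-y ^ 2 / b) := Real.exp_pos _
  have h3 : 0 < Real.exp (-x ^ 2 / b) := Real.exp_pos _
  rw [div_lt_div_iff₀ (by positivity) (by positivity)]
  have h4 : a * Real.exp (-y ^ 2 / b) ≤ a * Real.exp (-x ^ 2 / b) := by gcongr
  have h5 : x * (1 + a * Real.exp (-y ^ 2 / b)) ≤ x * (1 + a * Real.exp (-x ^ 2 / b)) := by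
    gcongr
  have h6 : x * (1 + a * Real.exp (-x ^ 2 / b)) < y * (1 + a * Real.exp (-x ^ 2 / b)) := by
    gcongr
  linarith

lemma hfun_gfun_aux (a b s : ℝ) (ha : 0 < a) (hb : 0 < b) (hs : 0 < s) :
    hfun a b (gfun a b s) = s := by
  apply Function.invFun_eq
  have hc : Continuous (hfun a b) := by
    unfold hfun
    apply Continuous.div (by fun_prop) (by fun_prop)
    intro x
    have := Real.exp_pos (-x ^ 2 / b)
    positivity
  have hX : 0 ≤ s * (1 + a) := by positivity
  have h0 : hfun a b 0 = 0 := by simp [hfun]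
  have h1 : s ≤ hfun a b (s * (1 + a)) := by
    unfold hfun
    have h2 : Real.exp (-(s * (1 + a)) ^ 2 / b) ≤ 1 := by
      rw [Real.exp_le_one_iff]
      apply div_nonpos_of_nonpos_of_nonneg _ hb.le
      have := sq_nonneg (s * (1 + a))
      linarith
    have h3 := Real.exp_pos (-(s * (1 + a)) ^ 2 / b)
    rw [le_div_iff₀ (by positivity)]
    gcongr
    nlinarith
  obtain ⟨x, _, hx⟩ := intermediate_value_Icc hX hc.continuousOn
    (show s ∈ Set.Icc (hfun a b 0) (hfun a b (s * (1 + a))) from ⟨by rw [h0]; exact hs.le, h1⟩)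
  exact ⟨x, hx⟩

lemma lt_gfun_aux (a b s : ℝ) (ha : 0 < a) (hb : 0 < b) (hs : 0 < s) :
    s < gfun a b s := by
  have h := hfun_gfun_aux a b s ha hb hs
  set g := gfun a b s
  unfold hfun at h
  have h3 := Real.exp_pos (-g ^ 2 / b)
  rw [div_eq_iff (by positivity)] at h
  have : 0 < s * (a * Real.exp (-g ^ 2 / b)) := by positivity
  nlinarith

lemma hfun_set_aux (a b s : ℝ) (ha : 0 < a) (hb : 0 < b) (hs : 0 < s) :
    {z | hfun a b z ≤ s} = Set.Iic (gfun a b s) := by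
  have h := hfun_gfun_aux a b s ha hb hs
  have hg := lt_gfun_aux a b s ha hb hs
  ext z
  simp only [Set.mem_setOf_eq, Set.mem_Iic]
  constructor
  · intro hz
    by_contra! hlt
    have := hfun_lt_aux a b _ _ ha hb (hs.trans hg).le hlt
    linarith
  · intro hz
    rcases le_or_gt z 0 with h0 | h0
    · refine le_trans ?_ hs.le
      unfold hfun
      have h3 := Real.exp_pos (-z ^ 2 / b)
      exact div_nonpos_of_nonpos_of_nonneg h0 (by positivity)
    · rcases hz.lt_or_eq with h1 | h1
      · have := hfun_lt_aux a b _ _ ha hb h0.le h1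
        linarith
      · rw [h1, h]

lemma gauss_half_aux (v : ℝ≥0) (hv : v ≠ 0) :
    (ProbabilityTheory.gaussianReal 0 v) (Set.Iio 0) = 1 / 2 := by
  have := ProbabilityTheory.nullSingletonClass_gaussianReal (μ := 0) hv
  have h1 : (ProbabilityTheory.gaussianReal 0 v) (Set.Ioi 0)
      = (ProbabilityTheory.gaussianReal 0 v) (Set.Iio 0) := by
    have h := ProbabilityTheory.gaussianReal_map_neg (μ := 0) (v := v)
    rw [neg_zero] at h
    conv_lhs => rw [← h]
    rw [Measure.map_apply measurable_neg measurableSet_Ioi]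
    congr 1
    ext x
    simp
  have h2 : (ProbabilityTheory.gaussianReal 0 v) (Set.Iio 0)
      + (ProbabilityTheory.gaussianReal 0 v) (Set.Ici 0) = 1 := by
    have := measure_add_measure_compl (μ := ProbabilityTheory.gaussianReal 0 v)
      (measurableSet_Iio (a := (0 : ℝ)))
    rwa [Set.compl_Iio, measure_univ] at this
  rw [← measure_congr (Ioi_ae_eq_Ici (μ := ProbabilityTheory.gaussianReal 0 v)), h1,
    ← two_mul] at h2
  rw [ENNReal.eq_div_iff (by simp) (by simp)]
  exact h2

/-- for `Z ~ N(0,σ²)` and `s > 0`,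
`P([1 + exp(2α)exp(−αZ²/σ²)]⁻¹ Z ≤ s) = 1/2 + P(0 ≤ Z ≤ g(s)) > P(Z ≤ s)`. -/
theorem statement14 (σ α : ℝ) (hσ : 0 < σ) (hα : 0 < α) (s : ℝ) (hs : 0 < s) :
    (ProbabilityTheory.gaussianReal 0 (Real.toNNReal (σ ^ 2)))
        {z | (1 + Real.exp (2 * α) * Real.exp (-α * z ^ 2 / σ ^ 2))⁻¹ * z ≤ s} =
      1 / 2 + (ProbabilityTheory.gaussianReal 0 (Real.toNNReal (σ ^ 2)))
        {z | 0 ≤ z ∧ z ≤ gfun (Real.exp (2 * α)) (σ ^ 2 / α) s} ∧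
    (ProbabilityTheory.gaussianReal 0 (Real.toNNReal (σ ^ 2))) {z | z ≤ s} <
      (ProbabilityTheory.gaussianReal 0 (Real.toNNReal (σ ^ 2)))
        {z | (1 + Real.exp (2 * α) * Real.exp (-α * z ^ 2 / σ ^ 2))⁻¹ * z ≤ s} := by
  have ha : 0 < Real.exp (2 * α) := Real.exp_pos _
  have hb : 0 < σ ^ 2 / α := by positivity
  have hv : Real.toNNReal (σ ^ 2) ≠ 0 := by
    have : 0 < σ ^ 2 := by positivity
    simpa using hσ.ne'
  have hset : {z : ℝ | (1 + Real.exp (2 * α) * Real.exp (-α * z ^ 2 / σ ^ 2))⁻¹ * z ≤ s}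
      = Set.Iic (gfun (Real.exp (2 * α)) (σ ^ 2 / α) s) := by
    rw [← hfun_set_aux _ _ s ha hb hs]
    ext z
    have h1 : -α * z ^ 2 / σ ^ 2 = -z ^ 2 / (σ ^ 2 / α) := by
      field_simp
    simp only [Set.mem_setOf_eq, hfun]
    rw [h1, inv_mul_eq_div]
  have hg := lt_gfun_aux _ _ s ha hb hs
  rw [hset]
  set g := gfun (Real.exp (2 * α)) (σ ^ 2 / α) s
  constructor
  · have h1 : Set.Iic g = Set.Iio 0 ∪ Set.Icc 0 g :=
      (Set.Iio_union_Icc_eq_Iic (hs.trans hg).le).symm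
    rw [h1, measure_union _ measurableSet_Icc, gauss_half_aux _ hv]
    · rfl
    · rw [Set.disjoint_left]
      intro x hx hx'
      exact absurd hx'.1 (not_le.mpr hx)
  · have h1 : Set.Iic g = Set.Iic s ∪ Set.Ioc s g := (Set.Iic_union_Ioc_eq_Iic hg.le).symm
    have h2 : (ProbabilityTheory.gaussianReal 0 (Real.toNNReal (σ ^ 2))) (Set.Ioc s g) ≠ 0 := by
      intro h0
      have := ProbabilityTheory.gaussianReal_absolutelyContinuous' 0 hv h0
      rw [Real.volume_Ioc, ENNReal.ofReal_eq_zero] at this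
      linarith
    rw [h1, measure_union (Set.Iic_disjoint_Ioc le_rfl) measurableSet_Ioc]
    exact ENNReal.lt_add_right (measure_ne_top _ _) h2

end
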